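/- There exists a constant K ≥ 1 (the Grothendieck constant works) with the following property: for all finite nonempty sets S and T and every ψ : S × T → ℂ that is a Schur multiplier of norm at most 1, there exist scalars λ_m ∈ ℂ and functions ε_m : S → ℂ, η_m : T → ℂ (m ∈ ℕ) with |ε_m(s)| ≤ 1 and |η_m(t)| ≤ 1 for all m, s, t, Σ_{m∈ℕ} |λ_m| ≤ K, and ψ(s,t) = Σ_{m∈ℕ} λ_m · ε_m(s) · η_m(t) for all (s,t) ∈ S × T (the series converging absolutely). -/

import Mathlib

open scoped ENNReal NNReal
open MeasureTheory ContinuousLinearMap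

noncomputable section

/-- `ψ : S × T → ℂ` is a Schur multiplier of norm at most `C`: for every bounded operator
`A : ℓ²(S) → ℓ²(T)` there is a bounded `B : ℓ²(S) → ℓ²(T)` whose matrix entries are
`ψ(s,t) · A(s,t)` and with `‖B‖ ≤ C‖A‖`. -/
def IsSchurMultiplier {S T : Type*} (ψ : S × T → ℂ) (C : ℝ) : Prop :=
  letI := Classical.decEq S
  letI := Classical.decEq T
  ∀ A : lp (fun _ : S => ℂ) 2 →L[ℂ] lp (fun _ : T => ℂ) 2,
    ∃ B : lp (fun _ : S => ℂ) 2 →L[ℂ] lp (fun _ : T => ℂ) 2,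
      (∀ (s : S) (t : T),
        (inner (𝕜 := ℂ) (lp.single 2 t 1) (B (lp.single 2 s 1)))
          = ψ (s, t) * inner (𝕜 := ℂ) (lp.single 2 t 1) (A (lp.single 2 s 1))) ∧
      ‖B‖ ≤ C * ‖A‖

def Gam {S T : Type} (C : ℝ) (φ : S → T → ℂ) : Prop :=
  ∃ (ι : Type) (_ : Fintype ι) (x : S → ι → ℂ) (y : T → ι → ℂ),
    (∀ s, ∑ i, ‖x s i‖ ^ 2 ≤ C) ∧ (∀ t, ∑ i, ‖y t i‖ ^ 2 ≤ C) ∧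
    ∀ s t, φ s t = ∑ i, x s i * y t i

lemma par2 (r a : ℂ) : ‖r + a‖ ^ 2 + ‖r - a‖ ^ 2 = 2 * ‖r‖ ^ 2 + 2 * ‖a‖ ^ 2 := by
  simp only [← Complex.normSq_eq_norm_sq, Complex.normSq_apply, Complex.add_re, Complex.add_im,
    Complex.sub_re, Complex.sub_im]
  ring

lemma par4 (r a : ℂ) : ‖r + a‖ ^ 4 + ‖r - a‖ ^ 4
    ≤ 2 * ‖r‖ ^ 4 + 12 * ‖r‖ ^ 2 * ‖a‖ ^ 2 + 2 * ‖a‖ ^ 4 := by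
  have h : ∀ z : ℂ, ‖z‖ ^ 4 = (‖z‖ ^ 2) ^ 2 := fun z => by ring
  simp only [h]
  simp only [← Complex.normSq_eq_norm_sq, Complex.normSq_apply, Complex.add_re, Complex.add_im,
    Complex.sub_re, Complex.sub_im]
  nlinarith [sq_nonneg (r.re * a.im - r.im * a.re)]

lemma rademacher (n : ℕ) : ∃ (Ω : Type) (_ : Fintype Ω) (N : ℝ) (R : (Fin n → ℂ) → Ω → ℂ),
    0 < N ∧ (∑ _ω : Ω, (1 : ℝ)) = N ∧
    (∀ x y, ∑ ω, R x ω * R y ω = N * ∑ i, x i * y i) ∧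
    (∀ x, ∑ ω, ‖R x ω‖ ^ 2 = N * ∑ i, ‖x i‖ ^ 2) ∧
    (∀ x, ∑ ω, ‖R x ω‖ ^ 4 ≤ N * (3 * (∑ i, ‖x i‖ ^ 2) ^ 2)) := by
  induction n with
  | zero => exact ⟨Unit, inferInstance, 1, fun _ _ => 0, by simp⟩
  | succ n ih =>
    obtain ⟨Ω, _, N, R, hN, hc, h1, h2, h4⟩ := ih
    refine ⟨Ω × Bool, inferInstance, 2 * N,
      fun x p => if p.2 then R (fun i => x i.succ) p.1 + x 0 else R (fun i => x i.succ) p.1 - x 0,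
      by positivity, ?_, ?_, ?_, ?_⟩
    · rw [Fintype.sum_prod_type, ← hc, Finset.mul_sum]; simp
    · intro x y
      have := h1 (fun i => x i.succ) (fun i => y i.succ)
      have hc' : (∑ _ω : Ω, (1 : ℂ)) = N := by rw [← hc]; push_cast; rfl
      rw [Fintype.sum_prod_type, Fin.sum_univ_succ]
      calc _ = ∑ ω, (2 * (R (fun i => x i.succ) ω * R (fun i => y i.succ) ω)
                + 2 * x 0 * y 0 * 1) := by
            refine Finset.sum_congr rfl fun ω _ => ?_
            simp; ring
        _ = _ := by
            rw [Finset.sum_add_distrib, ← Finset.mul_sum, ← Finset.mul_sum, this, hc']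
            push_cast; ring
    · intro x
      have := h2 (fun i => x i.succ)
      rw [Fintype.sum_prod_type, Fin.sum_univ_succ]
      calc _ = ∑ ω, (2 * ‖R (fun i => x i.succ) ω‖ ^ 2 + 2 * ‖x 0‖ ^ 2 * 1) := by
            refine Finset.sum_congr rfl fun ω _ => ?_
            simp [par2]
        _ = _ := by
            rw [Finset.sum_add_distrib, ← Finset.mul_sum, ← Finset.mul_sum, this, hc]
            ring
    · intro x
      have e2 := h2 (fun i => x i.succ)
      have e4 := h4 (fun i => x i.succ)
      rw [Fintype.sum_prod_type, Fin.sum_univ_succ]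
      calc _ ≤ ∑ ω, (2 * ‖R (fun i => x i.succ) ω‖ ^ 4
                + 12 * ‖x 0‖ ^ 2 * ‖R (fun i => x i.succ) ω‖ ^ 2 + 2 * ‖x 0‖ ^ 4 * 1) := by
            refine Finset.sum_le_sum fun ω _ => ?_
            have := par4 (R (fun i => x i.succ) ω) (x 0)
            simp; linarith
        _ ≤ _ := by
            rw [Finset.sum_add_distrib, Finset.sum_add_distrib, ← Finset.mul_sum,
              ← Finset.mul_sum, ← Finset.mul_sum, e2, hc]
            have : 0 ≤ N * ‖x 0‖ ^ 4 := by positivity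
            nlinarith

def tr (z : ℂ) : ℂ := if ‖z‖ ≤ 8 then z else 0
def tl (z : ℂ) : ℂ := if ‖z‖ ≤ 8 then 0 else z
lemma tr_tl (z : ℂ) : tr z + tl z = z := by unfold tr tl; split_ifs <;> simp
lemma tr_le (z : ℂ) : ‖tr z‖ ≤ 8 := by unfold tr; split_ifs <;> simp [*]
lemma tr_le' (z : ℂ) : ‖tr z‖ ^ 2 ≤ ‖z‖ ^ 2 := by unfold tr; split_ifs <;> simp
lemma tl_le (z : ℂ) : ‖tl z‖ ^ 2 ≤ ‖z‖ ^ 4 / 64 := by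
  unfold tl; split_ifs with h
  · simp; positivity
  · push Not at h
    have : (64:ℝ) ≤ ‖z‖ ^ 2 := by nlinarith
    nlinarith [sq_nonneg ‖z‖]

lemma step {S T : Type} (φ : S → T → ℂ) (h : Gam 1 φ) :
    ∃ (Ω : Type) (_ : Fintype Ω) (N : ℝ) (ε : Ω → S → ℂ) (η : Ω → T → ℂ) (φ' : S → T → ℂ),
      0 < N ∧ (∑ _ω : Ω, (1 : ℝ)) = N ∧ (∀ ω s, ‖ε ω s‖ ≤ 1) ∧ (∀ ω t, ‖η ω t‖ ≤ 1) ∧ Gam 1 φ' ∧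
      ∀ s t, φ s t = (∑ ω, ((64 / N : ℝ) : ℂ) * ε ω s * η ω t) + (1 / 2) * φ' s t := by
  obtain ⟨ι, _, x, y, hx, hy, hφ⟩ := h
  obtain ⟨Ω, _, N, R, hN, hc, h1, h2, h4⟩ := rademacher (Fintype.card ι)
  let e := (Fintype.equivFin ι).symm
  have hx' : ∀ s, ∑ i, ‖x s (e i)‖ ^ 2 ≤ 1 := fun s => by
    rw [e.sum_comp (fun i => ‖x s i‖ ^ 2)]; exact hx s
  have hy' : ∀ s, ∑ i, ‖y s (e i)‖ ^ 2 ≤ 1 := fun s => by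
    rw [e.sum_comp (fun i => ‖y s i‖ ^ 2)]; exact hy s
  have hφ' : ∀ s t, φ s t = ∑ i, x s (e i) * y t (e i) := fun s t => by
    rw [e.sum_comp (fun i => x s i * y t i)]; exact hφ s t
  let X : S → Ω → ℂ := fun s => R (fun i => x s (e i))
  let Y : T → Ω → ℂ := fun s => R (fun i => y s (e i))
  have key : ∀ z : Fin (Fintype.card ι) → ℂ, ∑ i, ‖z i‖ ^ 2 ≤ 1 →
      ∑ ω, ‖R z ω‖ ^ 2 ≤ N ∧ ∑ ω, ‖tr (R z ω)‖ ^ 2 ≤ N ∧ ∑ ω, ‖tl (R z ω)‖ ^ 2 ≤ N / 16 := by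
    intro z hz
    have hz0 : 0 ≤ ∑ i, ‖z i‖ ^ 2 := by positivity
    have a : ∑ ω, ‖R z ω‖ ^ 2 ≤ N := by rw [h2]; nlinarith
    refine ⟨a, (Finset.sum_le_sum fun ω _ => tr_le' _).trans a,
      (Finset.sum_le_sum fun ω _ => tl_le _).trans ?_⟩
    rw [← Finset.sum_div]
    have := h4 z
    have h' : (∑ i, ‖z i‖ ^ 2) ^ 2 ≤ 1 := by nlinarith
    nlinarith
  have hsN : (Real.sqrt N : ℂ) * Real.sqrt N = N := by
    rw [← Complex.ofReal_mul, Real.mul_self_sqrt hN.le]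
  have hN' : (N : ℂ) ≠ 0 := by exact_mod_cast hN.ne'
  have hs0 : (Real.sqrt N : ℂ) ≠ 0 := by
    intro h; rw [h] at hsN; simp at hsN; exact hN' hsN.symm
  have hsq : Real.sqrt N ^ 2 = N := Real.sq_sqrt hN.le
  let x' : S → Ω ⊕ Ω → ℂ := fun s => Sum.elim (fun ω => tr (X s ω) * (Real.sqrt 2 / 2) / Real.sqrt N)
    (fun ω => tl (X s ω) * (2 * Real.sqrt 2) / Real.sqrt N)
  let y' : T → Ω ⊕ Ω → ℂ := fun t => Sum.elim (fun ω => tl (Y t ω) * (2 * Real.sqrt 2) / Real.sqrt N)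
    (fun ω => Y t ω * (Real.sqrt 2 / 2) / Real.sqrt N)
  have h22 : (Real.sqrt 2 : ℝ) ^ 2 = 2 := Real.sq_sqrt (by norm_num)
  have h22' : (Real.sqrt 2 : ℂ) * Real.sqrt 2 = 2 := by
    rw [← Complex.ofReal_mul, Real.mul_self_sqrt (by norm_num)]; norm_num
  refine ⟨Ω, inferInstance, N, fun ω s => tr (X s ω) / 8, fun ω t => tr (Y t ω) / 8,
    fun s t => ∑ i, x' s i * y' t i, hN, hc, ?_, ?_, ⟨Ω ⊕ Ω, inferInstance, x', y', ?_, ?_, ?_⟩, ?_⟩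
  · intro ω s
    have := tr_le (X s ω)
    rw [norm_div]; norm_num; linarith
  · intro ω s
    have := tr_le (Y s ω)
    rw [norm_div]; norm_num; linarith
  · intro s
    obtain ⟨k1, k2, k3⟩ := key _ (hx' s)
    simp only [x', Fintype.sum_sum_type, Sum.elim_inl, Sum.elim_inr, norm_div, norm_mul, div_pow,
      mul_pow, Complex.norm_real, Real.norm_eq_abs, sq_abs, hsq, h22, ← Finset.sum_div,
      ← Finset.sum_mul]
    rw [← add_div, div_le_one hN]
    norm_num
    simp only [X]
    linarith
  · intro s
    obtain ⟨k1, k2, k3⟩ := key _ (hy' s)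
    simp only [y', Fintype.sum_sum_type, Sum.elim_inl, Sum.elim_inr, norm_div, norm_mul, div_pow,
      mul_pow, Complex.norm_real, Real.norm_eq_abs, sq_abs, hsq, h22, ← Finset.sum_div,
      ← Finset.sum_mul]
    rw [← add_div, div_le_one hN]
    norm_num
    simp only [Y]
    linarith
  · intro s t; rfl
  · intro s t
    have e1 : φ s t = ∑ ω, X s ω * Y t ω / N := by
      rw [← Finset.sum_div, hφ' s t, eq_div_iff hN', h1]; ring
    rw [e1]
    simp only [x', y', Fintype.sum_sum_type, Sum.elim_inl, Sum.elim_inr]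
    rw [← Finset.sum_add_distrib, Finset.mul_sum, ← Finset.sum_add_distrib]
    refine Finset.sum_congr rfl fun ω _ => ?_
    have a := tr_tl (X s ω)
    have b := tr_tl (Y t ω)
    generalize tr (X s ω) = p at *
    generalize tl (X s ω) = q at *
    generalize tr (Y t ω) = r at *
    generalize hh : tl (Y t ω) = u at *
    rw [← a, ← b]
    have i1 : ∀ z w : ℂ, z / (Real.sqrt N : ℂ) * (w / (Real.sqrt N : ℂ)) = z * w / N := by
      intro z w; rw [div_mul_div_comm, hsN]
    rw [i1, i1]
    push_cast
    have i2 : p * (↑√2 / 2) * (u * (2 * ↑√2)) = 2 * (p * u) := by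
      linear_combination (p * u) * h22'
    have i3 : q * (2 * ↑√2) * ((r + u) * (↑√2 / 2)) = 2 * (q * (r + u)) := by
      linear_combination (q * (r + u)) * h22'
    rw [i2, i3]
    field_simp
    ring

lemma Gam.norm_le {S T : Type} {φ : S → T → ℂ} (h : Gam 1 φ) (s : S) (t : T) : ‖φ s t‖ ≤ 1 := by
  obtain ⟨ι, _, x, y, hx, hy, hφ⟩ := h
  rw [hφ]
  refine (norm_sum_le _ _).trans ?_
  calc _ ≤ ∑ i, (‖x s i‖ ^ 2 / 2 + ‖y t i‖ ^ 2 / 2) := by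
        refine Finset.sum_le_sum fun i _ => ?_
        rw [norm_mul]; nlinarith [sq_nonneg (‖x s i‖ - ‖y t i‖)]
    _ ≤ 1 := by
        rw [Finset.sum_add_distrib, ← Finset.sum_div, ← Finset.sum_div]
        linarith [hx s, hy t]

lemma to_nat {S T : Type} {J : Type} [Countable J] (K : ℝ) (φ : S → T → ℂ)
    (lam : J → ℂ) (ε : J → S → ℂ) (η : J → T → ℂ)
    (h1 : ∀ m s, ‖ε m s‖ ≤ 1) (h2 : ∀ m t, ‖η m t‖ ≤ 1)
    (h3 : Summable (fun m => ‖lam m‖)) (h4 : (∑' m, ‖lam m‖) ≤ K)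
    (h5 : ∀ s t, HasSum (fun m => lam m * ε m s * η m t) (φ s t)) :
    ∃ (lam : ℕ → ℂ) (ε : ℕ → S → ℂ) (η : ℕ → T → ℂ),
            (∀ m s, ‖ε m s‖ ≤ 1) ∧ (∀ m t, ‖η m t‖ ≤ 1) ∧
            Summable (fun m => ‖lam m‖) ∧ (∑' m, ‖lam m‖) ≤ K ∧
            ∀ s t, HasSum (fun m => lam m * ε m s * η m t) (φ s t) := by
  obtain ⟨e, he⟩ := Countable.exists_injective_nat J
  have key : HasSum (fun m => ‖Function.extend e lam 0 m‖) (∑' m, ‖lam m‖) := by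
    rw [← he.hasSum_iff]
    · convert h3.hasSum using 2 with m
      simp [he.extend_apply]
    · intro x hx
      rw [Function.extend_apply' _ _ _ (by simpa using hx)]; simp
  refine ⟨Function.extend e lam 0, Function.extend e ε 0, Function.extend e η 0, ?_, ?_,
    key.summable, key.tsum_eq ▸ h4, ?_⟩
  · intro m s
    by_cases h : ∃ a, e a = m
    · obtain ⟨a, rfl⟩ := h; rw [he.extend_apply]; exact h1 a s
    · rw [Function.extend_apply' _ _ _ h]; simp
  · intro m s
    by_cases h : ∃ a, e a = m
    · obtain ⟨a, rfl⟩ := h; rw [he.extend_apply]; exact h2 a s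
    · rw [Function.extend_apply' _ _ _ h]; simp
  · intro s t
    rw [← he.hasSum_iff]
    · convert h5 s t using 2 with m
      simp [he.extend_apply]
    · intro x hx
      rw [Function.extend_apply' _ _ _ (by simpa using hx)]; simp

lemma series {S T : Type} (φ : S → T → ℂ) (h : Gam 1 φ) :
    ∃ (lam : ℕ → ℂ) (ε : ℕ → S → ℂ) (η : ℕ → T → ℂ),
            (∀ m s, ‖ε m s‖ ≤ 1) ∧ (∀ m t, ‖η m t‖ ≤ 1) ∧
            Summable (fun m => ‖lam m‖) ∧ (∑' m, ‖lam m‖) ≤ 128 ∧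
            ∀ s t, HasSum (fun m => lam m * ε m s * η m t) (φ s t) := by
  choose Ω hΩ N ε η nx hN hc hε hη hg hs using fun p : {φ : S → T → ℂ // Gam 1 φ} => step p.1 p.2
  let Φ : ℕ → {φ : S → T → ℂ // Gam 1 φ} := fun n =>
    Nat.rec ⟨φ, h⟩ (fun _ p => ⟨nx p, hg p⟩) n
  have hΦ : ∀ n, (Φ (n + 1)).1 = nx (Φ n) := fun n => rfl
  let c : ℕ → S → T → ℂ := fun k s t =>
    ∑ ω, ((64 / N (Φ k) : ℝ) : ℂ) * ε (Φ k) ω s * η (Φ k) ω t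
  have hpart : ∀ s t n, φ s t - ∑ k ∈ Finset.range n, (1 / 2 : ℂ) ^ k * c k s t
      = (1 / 2 : ℂ) ^ n * (Φ n).1 s t := by
    intro s t n
    induction n with
    | zero => simp [Φ]
    | succ n ih =>
      rw [Finset.sum_range_succ, ← sub_sub, ih, hΦ, hs (Φ n) s t]
      simp only [c]
      ring
  have hlam : ∀ k, ∑ ω : Ω (Φ k), ‖(1 / 2 : ℂ) ^ k * ((64 / N (Φ k) : ℝ) : ℂ)‖ = 64 * (1 / 2) ^ k := by
    intro k
    have a := hN (Φ k)
    have b := hc (Φ k)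
    rw [← mul_one (‖_‖), ← Finset.mul_sum] 
    rw [b, norm_mul, Complex.norm_real, Real.norm_of_nonneg (by positivity)]
    simp
    field_simp
  have hsum : Summable fun p : (k : ℕ) × Ω (Φ k) =>
      ‖(1 / 2 : ℂ) ^ p.1 * ((64 / N (Φ p.1) : ℝ) : ℂ)‖ := by
    rw [summable_sigma_of_nonneg (fun _ => norm_nonneg _)]
    refine ⟨fun k => (hasSum_fintype _).summable, ?_⟩
    simp only [tsum_fintype, hlam]
    exact (summable_geometric_two).mul_left 64
  have : Countable ((k : ℕ) × Ω (Φ k)) := inferInstance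
  refine to_nat (J := (k : ℕ) × Ω (Φ k)) 128 φ
    (fun p => (1 / 2 : ℂ) ^ p.1 * ((64 / N (Φ p.1) : ℝ) : ℂ))
    (fun p => ε (Φ p.1) p.2) (fun p => η (Φ p.1) p.2) (fun p s => hε _ _ _)
    (fun p s => hη _ _ _) hsum ?_ ?_
  · rw [hsum.tsum_sigma]
    simp only [tsum_fintype, hlam]
    rw [tsum_mul_left, tsum_geometric_two]; norm_num
  · intro s t
    have hs' : Summable fun p : (k : ℕ) × Ω (Φ k) =>
        (1 / 2 : ℂ) ^ p.1 * ((64 / N (Φ p.1) : ℝ) : ℂ) * ε (Φ p.1) p.2 s * η (Φ p.1) p.2 t := by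
      refine Summable.of_norm_bounded hsum fun p => ?_
      rw [norm_mul, norm_mul]
      have a := hε (Φ p.1) p.2 s
      have b := hη (Φ p.1) p.2 t
      calc _ ≤ ‖(1 / 2 : ℂ) ^ p.1 * ((64 / N (Φ p.1) : ℝ) : ℂ)‖ * 1 * 1 := by gcongr
        _ = _ := by ring
    have hfib : ∀ k, HasSum (fun ω : Ω (Φ k) => 
        (1 / 2 : ℂ) ^ k * ((64 / N (Φ k) : ℝ) : ℂ) * ε (Φ k) ω s * η (Φ k) ω t)
        ((1 / 2 : ℂ) ^ k * c k s t) := by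
      intro k
      have e : (1 / 2 : ℂ) ^ k * c k s t = ∑ ω : Ω (Φ k),
          (1 / 2 : ℂ) ^ k * ((64 / N (Φ k) : ℝ) : ℂ) * ε (Φ k) ω s * η (Φ k) ω t := by
        simp only [c, Finset.mul_sum, mul_assoc]
      rw [e]
      exact hasSum_fintype _
    have hk := hs'.hasSum.sigma hfib
    have hlim : Filter.Tendsto (fun n => ∑ k ∈ Finset.range n, (1 / 2 : ℂ) ^ k * c k s t)
        Filter.atTop (nhds (φ s t)) := by
      rw [tendsto_iff_norm_sub_tendsto_zero]
      refine squeeze_zero (fun _ => norm_nonneg _) (fun n => ?_)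
        (tendsto_pow_atTop_nhds_zero_of_lt_one (r := (1 / 2 : ℝ)) (by norm_num) (by norm_num))
      rw [norm_sub_rev, hpart, norm_mul]
      have := (Φ n).2.norm_le s t
      calc _ ≤ ‖(1 / 2 : ℂ) ^ n‖ * 1 := by gcongr
        _ = _ := by simp
    have := tendsto_nhds_unique hk.tendsto_sum_nat hlim
    rw [← this]
    exact hs'.hasSum

lemma lp_norm_sq {S : Type} [Fintype S] (x : lp (fun _ : S => ℂ) 2) :
    ‖x‖ ^ 2 = ∑ s, ‖x s‖ ^ 2 := by
  have := lp.norm_rpow_eq_tsum (p := 2) (by simp) x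
  simpa [tsum_fintype] using this

/-- operator with matrix -/
def matOp {S T : Type} [Fintype S] [Fintype T] (A : S → T → ℂ) :
    lp (fun _ : S => ℂ) 2 →ₗ[ℂ] lp (fun _ : T => ℂ) 2 where
  toFun x := ⟨fun t => ∑ s, A s t * x s, Memℓp.all _⟩
  map_add' x y := by
    ext t
    simp only [lp.coeFn_add, Pi.add_apply, mul_add, Finset.sum_add_distrib]
  map_smul' c x := by
    ext t; simp [Finset.mul_sum, mul_left_comm]

lemma matOp_apply {S T : Type} [Fintype S] [Fintype T] (A : S → T → ℂ)
    (x : lp (fun _ : S => ℂ) 2) (t : T) : matOp A x t = ∑ s, A s t * x s := rfl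

lemma schur_bound {S T : Type} [Fintype S] [Fintype T] (ψ : S × T → ℂ)
    (hψ : IsSchurMultiplier ψ 1) (A : S → T → ℂ)
    (hA : ∀ (x : S → ℂ) (y : T → ℂ), (∑ s, ∑ t, A s t * x s * y t).re ≤
      ∑ s, ‖x s‖ ^ 2 + ∑ t, ‖y t‖ ^ 2) (p : S → ℂ) (q : T → ℂ) :
    (∑ s, ∑ t, A s t * ψ (s, t) * p s * q t).re ≤ ∑ s, ‖p s‖ ^ 2 + ∑ t, ‖q t‖ ^ 2 := by
  classical
  have hb : ∀ x, ‖matOp A x‖ ≤ 2 * ‖x‖ := by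
    intro x
    have h := hA x (fun t => (starRingEnd ℂ) (matOp A x t) / 2)
    have e : (∑ s, ∑ t, A s t * x s * ((starRingEnd ℂ) (matOp A x t) / 2)) =
        ((‖matOp A x‖ ^ 2 / 2 : ℝ) : ℂ) := by
      rw [Finset.sum_comm, lp_norm_sq, Finset.sum_div]
      push_cast
      refine Finset.sum_congr rfl fun t _ => ?_
      rw [← Finset.sum_mul, ← matOp_apply, mul_div_assoc', Complex.mul_conj']
    rw [e, Complex.ofReal_re, ← lp_norm_sq] at h
    simp only [norm_div, RCLike.norm_conj, div_pow, ← Finset.sum_div, ← lp_norm_sq] at h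
    norm_num at h
    refine abs_le_of_sq_le_sq' ?_ (by positivity) |>.2
    nlinarith
  obtain ⟨B, hB, hn⟩ := hψ ((matOp A).mkContinuous 2 hb)
  have hAn : ‖(matOp A).mkContinuous 2 hb‖ ≤ 2 := LinearMap.mkContinuous_norm_le _ (by norm_num) hb
  have hB2 : ‖B‖ ≤ 2 := by linarith
  let P : lp (fun _ : S => ℂ) 2 := ⟨p, Memℓp.all _⟩
  let Q : lp (fun _ : T => ℂ) 2 := ⟨fun t => (starRingEnd ℂ) (q t), Memℓp.all _⟩
  have hBe : ∀ s t, B (lp.single 2 s 1) t = ψ (s, t) * A s t := by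
    intro s t
    have := hB s t
    rw [lp.inner_single_left, lp.inner_single_left] at this
    simp only [RCLike.inner_apply, map_one, mul_one] at this
    have e : matOp A (lp.single 2 s (1 : ℂ)) t = A s t := by
      rw [matOp_apply]
      simp [lp.single_apply, Pi.single_apply]
    rw [← e]
    rw [LinearMap.mkContinuous_apply] at this
    convert this
  have hP : P = ∑ s, p s • lp.single 2 s (1 : ℂ) := by
    ext s
    rw [lp.coeFn_sum]
    simp [P, Pi.single_apply]
  have hBP : ∀ t, B P t = ∑ s, p s * (ψ (s, t) * A s t) := by
    intro t
    rw [hP, map_sum, lp.coeFn_sum]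
    simp [hBe]
  have e : (∑ s, ∑ t, A s t * ψ (s, t) * p s * q t) = inner ℂ Q (B P) := by
    rw [lp.inner_eq_tsum, tsum_fintype, Finset.sum_comm]
    refine Finset.sum_congr rfl fun t _ => ?_
    rw [hBP]
    simp only [Q, RCLike.inner_apply, Complex.conj_conj, Finset.sum_mul]
    refine Finset.sum_congr rfl fun s _ => ?_
    ring
  rw [e]
  have nP : ∑ s, ‖p s‖ ^ 2 = ‖P‖ ^ 2 := (lp_norm_sq P).symm
  have nQ : ∑ s, ‖q s‖ ^ 2 = ‖Q‖ ^ 2 := by rw [lp_norm_sq Q]; simp [Q]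
  rw [nP, nQ]
  calc _ ≤ ‖inner ℂ Q (B P)‖ := Complex.re_le_norm _
    _ ≤ ‖Q‖ * ‖B P‖ := norm_inner_le_norm _ _
    _ ≤ ‖Q‖ * (2 * ‖P‖) := by
      gcongr
      exact (B.le_opNorm P).trans (by gcongr)
    _ ≤ _ := by nlinarith [sq_nonneg (‖P‖ - ‖Q‖)]

lemma schur_bound' {S T : Type} [Fintype S] [Fintype T] (ψ : S × T → ℂ)
    (hψ : IsSchurMultiplier ψ 1) (M : S → T → ℂ) (a : S → ℝ) (b : T → ℝ)
    (ha : ∀ s, 0 < a s) (hb : ∀ t, 0 < b t)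
    (hM : ∀ (x : S → ℂ) (y : T → ℂ), (∑ s, ∑ t, M s t * x s * y t).re ≤
      ∑ s, a s * ‖x s‖ ^ 2 + ∑ t, b t * ‖y t‖ ^ 2) :
    (∑ s, ∑ t, M s t * ψ (s, t)).re ≤ ∑ s, a s + ∑ t, b t := by
  have h := schur_bound ψ hψ (fun s t => M s t / (Real.sqrt (a s) * Real.sqrt (b t))) ?_
    (fun s => Real.sqrt (a s)) (fun t => Real.sqrt (b t))
  · simp only [Complex.norm_real, Real.norm_eq_abs, sq_abs, Real.sq_sqrt (ha _).le,
      Real.sq_sqrt (hb _).le] at h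
    refine le_trans (le_of_eq ?_) h
    congr 1
    refine Finset.sum_congr rfl fun s _ => Finset.sum_congr rfl fun t _ => ?_
    have h1 : (Real.sqrt (a s) : ℂ) ≠ 0 := by exact_mod_cast (Real.sqrt_pos.2 (ha s)).ne'
    have h2 : (Real.sqrt (b t) : ℂ) ≠ 0 := by exact_mod_cast (Real.sqrt_pos.2 (hb t)).ne'
    field_simp
  · intro x y
    refine le_trans (le_of_eq ?_) ((hM (fun s => x s / Real.sqrt (a s))
      (fun t => y t / Real.sqrt (b t))).trans (le_of_eq ?_))
    · congr 1
      refine Finset.sum_congr rfl fun s _ => Finset.sum_congr rfl fun t _ => ?_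
      have h1 : (Real.sqrt (a s) : ℂ) ≠ 0 := by exact_mod_cast (Real.sqrt_pos.2 (ha s)).ne'
      have h2 : (Real.sqrt (b t) : ℂ) ≠ 0 := by exact_mod_cast (Real.sqrt_pos.2 (hb t)).ne'
      field_simp
    · congr 1 <;> refine Finset.sum_congr rfl fun s _ => ?_
      · have := (ha s).ne'
        rw [norm_div, div_pow, Complex.norm_real, Real.norm_eq_abs, sq_abs, Real.sq_sqrt (ha s).le]
        field_simp
      · have := (hb s).ne'
        rw [norm_div, div_pow, Complex.norm_real, Real.norm_eq_abs, sq_abs, Real.sq_sqrt (hb s).le]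
        field_simp

def GG (S T : Type) : Set ((S → ℝ) × (S × T → ℂ) × (T → ℝ)) :=
  {g | ∃ (ι : Type) (_ : Fintype ι) (x : S → ι → ℂ) (y : T → ι → ℂ),
    (∀ s, ∑ i, ‖x s i‖ ^ 2 ≤ g.1 s) ∧ (∀ t, ∑ i, ‖y t i‖ ^ 2 ≤ g.2.2 t) ∧
    ∀ s t, g.2.1 (s, t) = ∑ i, x s i * y t i}

lemma GG_add {S T : Type} {g h : (S → ℝ) × (S × T → ℂ) × (T → ℝ)} (hg : g ∈ GG S T)
    (hh : h ∈ GG S T) : g + h ∈ GG S T := by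
  obtain ⟨ι, _, x, y, hx, hy, hp⟩ := hg
  obtain ⟨κ, _, x', y', hx', hy', hp'⟩ := hh
  refine ⟨ι ⊕ κ, inferInstance, fun s => Sum.elim (x s) (x' s), fun t => Sum.elim (y t) (y' t),
    ?_, ?_, ?_⟩
  · intro s; simpa using add_le_add (hx s) (hx' s)
  · intro s; simpa using add_le_add (hy s) (hy' s)
  · intro s t; simp [hp, hp']

lemma GG_smul {S T : Type} {g : (S → ℝ) × (S × T → ℂ) × (T → ℝ)} (hg : g ∈ GG S T)
    {c : ℝ} (hc : 0 ≤ c) : c • g ∈ GG S T := by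
  obtain ⟨ι, _, x, y, hx, hy, hp⟩ := hg
  refine ⟨ι, inferInstance, fun s i => Real.sqrt c * x s i, fun t i => Real.sqrt c * y t i,
    ?_, ?_, ?_⟩
  · intro s
    simp only [norm_mul, mul_pow, Complex.norm_real, Real.norm_eq_abs, sq_abs, Real.sq_sqrt hc,
      ← Finset.mul_sum]
    simpa using mul_le_mul_of_nonneg_left (hx s) hc
  · intro s
    simp only [norm_mul, mul_pow, Complex.norm_real, Real.norm_eq_abs, sq_abs, Real.sq_sqrt hc,
      ← Finset.mul_sum]
    simpa using mul_le_mul_of_nonneg_left (hy s) hc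
  · intro s t
    have h : (Real.sqrt c : ℂ) * Real.sqrt c = c := by
      rw [← Complex.ofReal_mul, Real.mul_self_sqrt hc]
    have : ∀ i, (Real.sqrt c * x s i) * (Real.sqrt c * y t i) = (c : ℂ) * (x s i * y t i) := by
      intro i; linear_combination (x s i * y t i) * h
    simp only [this, ← Finset.mul_sum, ← hp]
    simp

lemma GG_closure {S T : Type} [Fintype S] [Fintype T] (ψ : S × T → ℂ)
    (h : ((fun _ => 1, ψ, fun _ => 1) : (S → ℝ) × (S × T → ℂ) × (T → ℝ)) ∈ closure (GG S T)) :
    Gam 2 (fun s t => ψ (s, t)) := by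
  classical
  -- radius
  obtain ⟨r, hr0, hr1, hr2⟩ : ∃ r : ℝ, 0 < r ∧ r ≤ 1 / 2 ∧ Fintype.card T * (2 * r ^ 2) ≤ 1 / 2 := by
    refine ⟨1 / (2 * (Fintype.card T + 1)), by positivity, ?_, ?_⟩
    · rw [div_le_div_iff₀ (by positivity) (by positivity)]
      have : (0:ℝ) ≤ Fintype.card T := by positivity
      linarith
    · have : (0:ℝ) ≤ Fintype.card T := by positivity
      rw [div_pow, mul_div_assoc', mul_div_assoc', div_le_div_iff₀ (by positivity) (by positivity)]
      nlinarith
  obtain ⟨g, hg, hd⟩ := Metric.mem_closure_iff.1 h r hr0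
  rw [Prod.dist_eq, Prod.dist_eq, max_lt_iff, max_lt_iff, dist_pi_lt_iff hr0, dist_pi_lt_iff hr0,
    dist_pi_lt_iff hr0] at hd
  obtain ⟨d1, d2, d3⟩ := hd
  have hE : ((fun _ => 1 / 2, fun p => ψ p - g.2.1 p, fun _ => 1 / 2) :
      (S → ℝ) × (S × T → ℂ) × (T → ℝ)) ∈ GG S T := by
    refine ⟨T, inferInstance, fun s t => Real.sqrt 2 * (ψ (s, t) - g.2.1 (s, t)),
      fun t t' => if t = t' then 1 / Real.sqrt 2 else 0, ?_, ?_, ?_⟩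
    · intro s
      refine le_trans ?_ hr2
      rw [← nsmul_eq_mul]
      refine Finset.sum_le_card_nsmul _ _ _ fun t _ => ?_
      have := (d2 (s, t)).le
      rw [dist_eq_norm] at this
      rw [norm_mul, mul_pow, Complex.norm_real, Real.norm_eq_abs, sq_abs, Real.sq_sqrt (by norm_num)]
      gcongr
    · intro t
      simp only [apply_ite norm, ite_pow, norm_zero]
      simp
    · intro s t
      have h1 : (Real.sqrt 2 : ℂ) ≠ 0 := by
        exact_mod_cast (Real.sqrt_pos.2 (by norm_num : (0:ℝ) < 2)).ne'
      simp
      field_simp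
  obtain ⟨ι, i, x, y, hx, hy, hp⟩ := GG_add hg hE
  refine ⟨ι, i, x, y, fun s => (hx s).trans ?_, fun t => (hy t).trans ?_, fun s t => ?_⟩
  · have := d1 s
    rw [Real.dist_eq, abs_lt] at this
    simp; linarith
  · have := d3 t
    rw [Real.dist_eq, abs_lt] at this
    simp; linarith
  · rw [← hp]; simp

lemma schur_gam {S T : Type} [Fintype S] [Fintype T] (ψ : S × T → ℂ)
    (hψ : IsSchurMultiplier ψ 1) : Gam 2 (fun s t => ψ (s, t)) := by
  classical
  apply GG_closure
  by_contra hn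
  have hconv : Convex ℝ (GG S T) := fun g hg h hh a b ha hb _ =>
    GG_add (GG_smul hg ha) (GG_smul hh hb)
  obtain ⟨f, u, hf, hu⟩ := geometric_hahn_banach_closed_point hconv.closure isClosed_closure hn
  have hzero : (0 : (S → ℝ) × (S × T → ℂ) × (T → ℝ)) ∈ GG S T :=
    ⟨Unit, inferInstance, 0, 0, by simp, by simp, by simp⟩
  have hu0 : 0 < u := by simpa using hf _ (subset_closure hzero)
  have hneg : ∀ g ∈ GG S T, f g ≤ 0 := by
    intro g hg
    by_contra! hpos
    have := hf _ (subset_closure (GG_smul hg (c := u / f g) (by positivity)))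
    rw [map_smul, smul_eq_mul, div_mul_cancel₀ _ hpos.ne'] at this
    exact lt_irrefl _ this
  let a : S → ℝ := fun s => - f (Pi.single s 1, 0, 0)
  let b : T → ℝ := fun t => - f (0, 0, Pi.single t 1)
  let M : S → T → ℂ := fun s t => ⟨f (0, Pi.single (s, t) 1, 0), - f (0, Pi.single (s, t) Complex.I, 0)⟩
  have hrep : ∀ g, f g = (∑ s, ∑ t, M s t * g.2.1 (s, t)).re - ∑ s, a s * g.1 s - ∑ t, b t * g.2.2 t := by
    rintro ⟨p, φ, q⟩
    have e : ((p, φ, q) : (S → ℝ) × (S × T → ℂ) × (T → ℝ)) =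
        (∑ s, p s • ((Pi.single s 1, 0, 0) : (S → ℝ) × (S × T → ℂ) × (T → ℝ))) +
        (∑ z, ((φ z).re • ((0, Pi.single z 1, 0) : (S → ℝ) × (S × T → ℂ) × (T → ℝ)) +
          (φ z).im • ((0, Pi.single z Complex.I, 0) : (S → ℝ) × (S × T → ℂ) × (T → ℝ)))) +
        (∑ t, q t • ((0, 0, Pi.single t 1) : (S → ℝ) × (S × T → ℂ) × (T → ℝ))) := by
      refine Prod.ext ?_ (Prod.ext ?_ ?_)
      · ext s; simp [Prod.fst_sum, Prod.snd_sum, Pi.single_apply]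
      · ext z
        simp [Prod.fst_sum, Prod.snd_sum, Pi.single_apply, Finset.sum_add_distrib]
      · ext s; simp [Prod.fst_sum, Prod.snd_sum, Pi.single_apply]
    rw [e]
    simp only [map_add, map_sum, map_smul, smul_eq_mul]
    rw [← e]
    simp only [Complex.re_sum, a, b, neg_mul, Finset.sum_neg_distrib, sub_neg_eq_add, M,
      Complex.mul_re, Fintype.sum_prod_type]
    rw [add_comm (∑ s, p s * _)]
    congr 1
    · congr 1
      · refine Finset.sum_congr rfl fun s _ => Finset.sum_congr rfl fun t _ => ?_
        ring
      · exact Finset.sum_congr rfl fun s _ => mul_comm _ _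
    · exact Finset.sum_congr rfl fun s _ => mul_comm _ _
  have hineq : ∀ (x : S → ℂ) (y : T → ℂ), (∑ s, ∑ t, M s t * x s * y t).re ≤
      ∑ s, a s * ‖x s‖ ^ 2 + ∑ t, b t * ‖y t‖ ^ 2 := by
    intro x y
    have := hneg (fun s => ‖x s‖ ^ 2, fun z => x z.1 * y z.2, fun t => ‖y t‖ ^ 2)
      ⟨Unit, inferInstance, fun s _ => x s, fun t _ => y t, by simp, by simp, by simp⟩
    rw [hrep] at this
    simp only [← mul_assoc] at this
    linarith
  have ha : ∀ s, 0 ≤ a s := by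
    intro s
    have := hineq (Pi.single s 1) 0
    simpa [Pi.single_apply, apply_ite norm, ite_pow] using this
  have hb : ∀ s, 0 ≤ b s := by
    intro s
    have := hineq 0 (Pi.single s 1)
    simpa [Pi.single_apply, apply_ite norm, ite_pow] using this
  have hpt := hrep (fun _ => 1, ψ, fun _ => 1)
  simp only [mul_one] at hpt
  let d : ℝ := u / (Fintype.card S + Fintype.card T + 1)
  have hd : 0 < d := by positivity
  have hd' : d * (Fintype.card S + Fintype.card T) ≤ u := by
    have : d * (Fintype.card S + Fintype.card T + 1) = u := by
      simp only [d]; field_simp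
    nlinarith
  have := schur_bound' ψ hψ M (fun s => a s + d) (fun t => b t + d)
    (fun s => by linarith [ha s]) (fun s => by linarith [hb s]) (fun x y => (hineq x y).trans (by
      gcongr <;> linarith))
  simp only [Finset.sum_add_distrib, Finset.sum_const, Finset.card_univ, nsmul_eq_mul] at this
  linarith

theorem stmt_17 :
    ∃ K : ℝ, 1 ≤ K ∧
      ∀ (S T : Type), Finite S → Finite T → Nonempty S → Nonempty T →
        ∀ ψ : S × T → ℂ, IsSchurMultiplier ψ 1 →
          ∃ (lam : ℕ → ℂ) (ε : ℕ → S → ℂ) (η : ℕ → T → ℂ),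
            (∀ m s, ‖ε m s‖ ≤ 1) ∧ (∀ m t, ‖η m t‖ ≤ 1) ∧
            Summable (fun m => ‖lam m‖) ∧ (∑' m, ‖lam m‖) ≤ K ∧
            ∀ s t, HasSum (fun m => lam m * ε m s * η m t) (ψ (s, t)) := by
  refine ⟨256, by norm_num, ?_⟩
  intro S T _ _ _ _ ψ hψ
  have := Fintype.ofFinite S
  have := Fintype.ofFinite T
  obtain ⟨ι, i, x, y, hx, hy, hp⟩ := schur_gam ψ hψ
  have hsq : ∀ z : ℂ, ‖z / (Real.sqrt 2 : ℂ)‖ ^ 2 = ‖z‖ ^ 2 / 2 := fun z => by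
    rw [norm_div, div_pow, Complex.norm_real, Real.norm_eq_abs, sq_abs, Real.sq_sqrt (by norm_num)]
  have h22' : (Real.sqrt 2 : ℂ) * Real.sqrt 2 = 2 := by
    rw [← Complex.ofReal_mul, Real.mul_self_sqrt (by norm_num)]; norm_num
  have hG : Gam 1 (fun s t => ψ (s, t) / 2) := by
    refine ⟨ι, i, fun s i => x s i / Real.sqrt 2, fun t i => y t i / Real.sqrt 2, ?_, ?_, ?_⟩
    · intro s; simp only [hsq, ← Finset.sum_div]; linarith [hx s]
    · intro s; simp only [hsq, ← Finset.sum_div]; linarith [hy s]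
    · intro s t
      simp only [div_mul_div_comm, h22', ← Finset.sum_div, ← hp]
  obtain ⟨lam, ε, η, h1, h2, h3, h4, h5⟩ := series _ hG
  refine ⟨fun m => 2 * lam m, ε, η, h1, h2, ?_, ?_, ?_⟩
  · simp only [norm_mul]; exact h3.mul_left _
  · simp only [norm_mul]; rw [tsum_mul_left]; norm_num; linarith
  · intro s t
    have := (h5 s t).mul_left 2
    have e : ψ (s, t) = 2 * (ψ (s, t) / 2) := by ring
    rw [e]
    simpa only [mul_assoc] using this
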